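/- arXiv:2011.11273 — 2 statements merged into one kernel-verified Lean document; each statement's English description precedes it below -/
import Mathlib

section
/- Let k ≥ 1, let X be a set, let τ : X → X be an involution, let μ be any set of multiplicity vectors, and let n ≥ k. For a k-element subset S of {1,…,n}, let (B_{τ,μ})_S : X^n → X^n act as B_{τ,μ} on the coordinates indexed by S (in increasing order) and as the identity elsewhere. Then for ANY two k-element subsets S and S' of {1,…,n} (regardless of the size of their intersection), the operators (B_{τ,μ})_S and (B_{τ,μ})_{S'} commute: (B_{τ,μ})_S ∘ (B_{τ,μ})_{S'} = (B_{τ,μ})_{S'} ∘ (B_{τ,μ})_S. -/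
/-!
Each operator `(B_{τ,μ})_S` either applies `τ` to all the coordinates in `S` or does nothing, and
the choice depends only on the multiplicity vector of the subtuple indexed by `S`
(`applyOn_condInv_apply`). That vector does not change when `τ` is applied to some of the
coordinates (`multVec_congr`), because every orbit is `τ`-invariant. Hence each of the two operators
makes the same choice whether or not the other has acted before it, and what remains is that
powers of `τ` acting on a single coordinate commute.
-/

/-- The map `X^n → X^n` acting as `B` on the coordinates indexed by the `k`-element
subset `S` (taken in increasing order) and as the identity on the remaining coordinates. -/
def applyOn {X : Type*} {n k : ℕ} (B : (Fin k → X) → (Fin k → X))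
    (S : Finset (Fin n)) (h : S.card = k) (x : Fin n → X) : Fin n → X :=
  fun i => if hi : i ∈ S then
    B (fun j => x ((S.orderIsoOfFin h j : {a // a ∈ S}) : Fin n)) ((S.orderIsoOfFin h).symm ⟨i, hi⟩)
  else x i

/-- A biquandle for free `k`-braids: a map `B : X^k → X^k` satisfying the four axioms. -/
structure IsBiquandle {X : Type*} (k : ℕ) (B : (Fin k → X) → (Fin k → X)) : Prop where
  perm_equivariant : ∀ (π : Equiv.Perm (Fin k)) (x : Fin k → X), B (x ∘ π) = B x ∘ π
  involutive : ∀ x, B (B x) = x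
  far_comm : ∀ p : ℕ, 2 ≤ p → p ≤ k - 1 →
    ∀ (h1 : (Finset.univ.filter (fun i : Fin (2*k-1) => (i : ℕ) < k)).card = k)
      (h2 : (Finset.univ.filter (fun i : Fin (2*k-1) => p ≤ (i : ℕ) ∧ (i : ℕ) < k + p)).card = k),
      applyOn B _ h1 ∘ applyOn B _ h2 = applyOn B _ h2 ∘ applyOn B _ h1
  tetrahedron : ∀ h : ∀ i : Fin (k+1), ((Finset.univ : Finset (Fin (k+1))).erase i).card = k,
      (List.ofFn (fun i : Fin (k+1) => applyOn B (Finset.univ.erase i) (h i))).foldr (· ∘ ·) id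
      = (List.ofFn (fun i : Fin (k+1) => applyOn B (Finset.univ.erase i) (h i))).reverse.foldr (· ∘ ·) id

/-- A non-fixed orbit of an involution `τ`: a two-element set `{p, τ p}` with `τ p ≠ p`. -/
def NonfixedOrbit {X : Type*} (τ : X → X) := { o : Set X // ∃ p, τ p ≠ p ∧ o = {p, τ p} }

/-- The multiplicity vector of a tuple `x ∈ X^k`: it assigns to each non-fixed orbit `o`
of `τ` the number of indices `j` with `x j ∈ o`. -/
noncomputable def multVec {X : Type*} {k : ℕ} (τ : X → X) (x : Fin k → X) : NonfixedOrbit τ → ℕ :=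
  fun o => Nat.card { j : Fin k // x j ∈ o.1 }

open Classical in
/-- The conditional involution map `B_{τ,μ}`: it applies `τ` to every coordinate if the
multiplicity vector of the tuple belongs to `μ`, and is the identity otherwise. -/
noncomputable def condInv {X : Type*} {k : ℕ} (τ : X → X) (μ : Set (NonfixedOrbit τ → ℕ))
    (x : Fin k → X) : Fin k → X :=
  if multVec τ x ∈ μ then τ ∘ x else x

theorem NonfixedOrbit.map_mem_iff {X : Type*} {τ : X → X} (hτ : Function.Involutive τ)
    (o : NonfixedOrbit τ) (a : X) : τ a ∈ o.1 ↔ a ∈ o.1 := by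
  obtain ⟨o, p, -, rfl⟩ := o
  simp only [Set.mem_insert_iff, Set.mem_singleton_iff, hτ.injective.eq_iff, hτ.eq_iff]
  exact or_comm

/-- The multiplicity vector is unchanged when `τ` is applied to an arbitrary subset of the
components. -/
theorem multVec_congr {X : Type*} {k : ℕ} {τ : X → X} (hτ : Function.Involutive τ)
    {x y : Fin k → X} (h : ∀ j, y j = τ (x j) ∨ y j = x j) : multVec τ y = multVec τ x := by
  funext o
  refine Nat.card_congr (Equiv.subtypeEquivRight fun j => ?_)
  rcases h j with h | h <;> rw [h]
  exact o.map_mem_iff hτ _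

open Classical in
theorem applyOn_condInv_apply {X : Type*} {k n : ℕ} (τ : X → X) (μ : Set (NonfixedOrbit τ → ℕ))
    (S : Finset (Fin n)) (h : S.card = k) (x : Fin n → X) (i : Fin n) :
    applyOn (condInv τ μ) S h x i =
      if i ∈ S ∧ multVec τ (fun j => x (S.orderIsoOfFin h j)) ∈ μ then τ (x i) else x i := by
  unfold applyOn condInv
  by_cases hi : i ∈ S
  · by_cases hm : multVec τ (fun j => x (S.orderIsoOfFin h j)) ∈ μ
    · simp only [hi, hm, dif_pos, if_pos, and_self, Function.comp_apply,
        OrderIso.apply_symm_apply]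
    · simp only [hi, hm, dif_pos, if_false, and_false, OrderIso.apply_symm_apply]
  · simp only [hi, dif_neg, not_false_eq_true, false_and, if_false]

/-- The action of `(B_{τ,μ})_S` does not affect the multiplicity vector read off from any
index set `T`. -/
theorem multVec_applyOn_condInv {X : Type*} {k n : ℕ} {τ : X → X} (hτ : Function.Involutive τ)
    (μ : Set (NonfixedOrbit τ → ℕ)) (S T : Finset (Fin n)) (hS : S.card = k) (hT : T.card = k)
    (x : Fin n → X) :
    multVec τ (fun j => applyOn (condInv τ μ) S hS x (T.orderIsoOfFin hT j)) =
      multVec τ (fun j => x (T.orderIsoOfFin hT j)) := by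
  classical
  refine multVec_congr hτ fun j => ?_
  rw [applyOn_condInv_apply]
  exact ite_eq_or_eq _ _ _

/-- for any involution `τ`, any set `μ` of multiplicity vectors and ANY two
`k`-element subsets `S, S'` of `{1,…,n}`, the operators `(B_{τ,μ})_S` and `(B_{τ,μ})_{S'}`
on `X^n` commute. -/
theorem condInv_applyOn_comm {X : Type*} (k n : ℕ) (hk : 1 ≤ k) (hkn : k ≤ n)
    (τ : X → X) (hτ : Function.Involutive τ) (μ : Set (NonfixedOrbit τ → ℕ))
    (S S' : Finset (Fin n)) (hS : S.card = k) (hS' : S'.card = k) :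
    applyOn (condInv τ μ) S hS ∘ applyOn (condInv τ μ) S' hS'
      = applyOn (condInv τ μ) S' hS' ∘ applyOn (condInv τ μ) S hS := by
  classical
  funext x i
  simp only [Function.comp_apply]
  rw [applyOn_condInv_apply τ μ S hS, applyOn_condInv_apply τ μ S' hS' (applyOn _ S hS x),
    multVec_applyOn_condInv hτ, multVec_applyOn_condInv hτ,
    applyOn_condInv_apply, applyOn_condInv_apply]
  split_ifs <;> rfl
end

section
/- Let X = ℤ/3ℤ. The set of maps B : X³ → X³ that satisfy the four axioms of a 3-biquandle and are nontrivial (B ≠ id), considered up to isomorphism of 3-biquandles, consists of exactly 7 isomorphism classes; moreover, every such nontrivial 3-biquandle on ℤ/3ℤ is isomorphic to a conditional involution 3-biquandle B_{τ,μ} for some involution τ of ℤ/3ℤ and some set μ of multiplicity vectors. -/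
/-- Isomorphism of `k`-biquandles on the same underlying set `X`: a bijection `φ` of `X`
with `φ^{×k} ∘ B = B' ∘ φ^{×k}`. -/
def BiquandleIso {X : Type*} {k : ℕ} (B B' : (Fin k → X) → (Fin k → X)) : Prop :=
  ∃ φ : X ≃ X, ∀ x : Fin k → X, (fun i => φ (B x i)) = B' (fun i => φ (x i))

/-! ### The action of `applyOn` in coordinates -/

/-- `applyOn` computed through any increasing enumeration `e` of the subset `S`. -/
lemma applyOn_apply_enum {X : Type*} {n k : ℕ} (B : (Fin k → X) → (Fin k → X))
    (S : Finset (Fin n)) (h : S.card = k) (x : Fin n → X) (e : Fin k → Fin n)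
    (he : StrictMono e) (hS : ∀ j, e j ∈ S) (j : Fin k) :
    applyOn B S h x (e j) = B (x ∘ e) j := by
  have hu : e = S.orderEmbOfFin h := Finset.orderEmbOfFin_unique h hS he
  have h1 : ∀ j, ((S.orderIsoOfFin h j : {a // a ∈ S}) : Fin n) = e j := by
    intro j
    rw [hu]
    rfl
  have h2 : (S.orderIsoOfFin h).symm ⟨e j, hS j⟩ = j := by
    rw [OrderIso.symm_apply_eq]
    exact Subtype.ext (h1 j).symm
  simp only [applyOn, hS j, dite_true, h2, h1]
  rfl

lemma applyOn_of_notMem {X : Type*} {n k : ℕ} (B : (Fin k → X) → (Fin k → X))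
    (S : Finset (Fin n)) (h : S.card = k) (x : Fin n → X) (i : Fin n) (hi : i ∉ S) :
    applyOn B S h x i = x i := by
  simp [applyOn, hi]

/-! ### The sign-flip biquandles -/

/-- The map negating a triple when its number of nonzero coordinates belongs to `s`, and fixing
it otherwise. Only `s ∩ {1, 2, 3}` matters. -/
def signFlip (s : Finset ℕ) (x : Fin 3 → ZMod 3) : Fin 3 → ZMod 3 :=
  if (Finset.univ.filter (fun j => x j ≠ 0)).card ∈ s then -x else x

lemma signFlip_involutive (s : Finset ℕ) (x : Fin 3 → ZMod 3) :
    signFlip s (signFlip s x) = x := by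
  by_cases h : (Finset.univ.filter (fun j => x j ≠ 0)).card ∈ s
  · simp [signFlip, h]
  · simp [signFlip, h]

lemma signFlip_perm (s : Finset ℕ) (π : Equiv.Perm (Fin 3)) (x : Fin 3 → ZMod 3) :
    signFlip s (x ∘ π) = signFlip s x ∘ π := by
  have h : (Finset.univ.filter (fun j => (x ∘ π) j ≠ 0)).card
      = (Finset.univ.filter (fun j => x j ≠ 0)).card :=
    Finset.card_bij (fun j _ => π j) (by simp) (by simp)
      (fun b hb => ⟨π.symm b, by simpa using hb, by simp⟩)
  unfold signFlip
  rw [h]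
  split_ifs <;> rfl

/-- On a subset `S`, the sign flip negates the coordinates in `S` when the number of nonzero
coordinates inside `S` belongs to `s`. -/
lemma applyOn_signFlip {n : ℕ} (s : Finset ℕ) (S : Finset (Fin n)) (h : S.card = 3)
    (x : Fin n → ZMod 3) (i : Fin n) :
    applyOn (signFlip s) S h x i
      = if i ∈ S ∧ (S.filter (fun j => x j ≠ 0)).card ∈ s then -x i else x i := by
  by_cases hi : i ∈ S
  · obtain ⟨j, hj⟩ : ∃ j, S.orderEmbOfFin h j = i := by
      have : i ∈ Set.range (S.orderEmbOfFin h) := by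
        rw [Finset.range_orderEmbOfFin]
        exact hi
      exact this
    have hc : (Finset.univ.filter (fun j => (x ∘ S.orderEmbOfFin h) j ≠ 0)).card
        = (S.filter (fun j => x j ≠ 0)).card := by
      refine Finset.card_bij (fun j _ => S.orderEmbOfFin h j) ?_ ?_ ?_
      · intro a ha
        simpa using ha
      · intro a _ b _ hab
        exact (S.orderEmbOfFin h).injective hab
      · intro b hb
        rw [Finset.mem_filter] at hb
        have : b ∈ Set.range (S.orderEmbOfFin h) := by
          rw [Finset.range_orderEmbOfFin]
          exact hb.1
        obtain ⟨a, rfl⟩ := this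
        exact ⟨a, by simpa using hb.2, rfl⟩
    rw [← hj, applyOn_apply_enum (signFlip s) S h x (S.orderEmbOfFin h)
      (S.orderEmbOfFin h).strictMono (fun j => Finset.orderEmbOfFin_mem S h j) j]
    unfold signFlip
    rw [hc]
    simp only [Finset.orderEmbOfFin_mem, true_and]
    split_ifs <;> rfl
  · simp [applyOn_of_notMem, hi]

lemma applyOn_signFlip_eq_zero {n : ℕ} (s : Finset ℕ) (S : Finset (Fin n)) (h : S.card = 3)
    (x : Fin n → ZMod 3) (i : Fin n) : applyOn (signFlip s) S h x i = 0 ↔ x i = 0 := by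
  rw [applyOn_signFlip]
  split_ifs <;> simp

/-- Sign flips on arbitrary subsets commute: each one changes only signs, and the condition
triggering it depends only on the supports. -/
lemma applyOn_signFlip_comm {n : ℕ} (s : Finset ℕ) (S T : Finset (Fin n)) (hS : S.card = 3)
    (hT : T.card = 3) (x : Fin n → ZMod 3) :
    applyOn (signFlip s) S hS (applyOn (signFlip s) T hT x)
      = applyOn (signFlip s) T hT (applyOn (signFlip s) S hS x) := by
  funext i
  rw [applyOn_signFlip s S hS, applyOn_signFlip s T hT (applyOn (signFlip s) S hS x)]
  simp only [ne_eq, applyOn_signFlip_eq_zero]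
  rw [applyOn_signFlip s S hS, applyOn_signFlip s T hT]
  simp only [ne_eq]
  split_ifs <;> rfl

lemma isBiquandle_signFlip (s : Finset ℕ) : IsBiquandle 3 (signFlip s) where
  perm_equivariant := signFlip_perm s
  involutive := signFlip_involutive s
  far_comm := by
    intro p _ _ h1 h2
    funext x
    exact applyOn_signFlip_comm s _ _ h1 h2 x
  tetrahedron := by
    intro h
    funext x
    simp only [List.ofFn_succ, List.ofFn_zero, List.reverse_cons, List.reverse_nil,
      List.nil_append, List.cons_append, List.foldr_cons, List.foldr_nil, Function.comp_apply,
      id_eq]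
    have hc := fun i j => applyOn_signFlip_comm s _ _ (h i) (h j)
    set A := fun i => applyOn (signFlip s) (Finset.univ.erase i) (h i) with hA
    change A 0 (A 1 (A 2 (A 3 x))) = A 3 (A 2 (A 1 (A 0 x)))
    have hc' : ∀ i j y, A i (A j y) = A j (A i y) := hc
    rw [hc' 2 3, hc' 1 3, hc' 0 3, hc' 1 2, hc' 0 2, hc' 0 1]

/-- The sign flip is the conditional involution for negation, whose only non-fixed orbit
is `{1, -1}`. -/
lemma signFlip_eq_condInv (s : Finset ℕ) :
    ∃ μ : Set (NonfixedOrbit (fun a : ZMod 3 => -a) → ℕ),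
      signFlip s = condInv (k := 3) (fun a : ZMod 3 => -a) μ := by
  let o : NonfixedOrbit (fun a : ZMod 3 => -a) := ⟨{1, -1}, 1, by decide, rfl⟩
  refine ⟨{m | m o ∈ s}, ?_⟩
  funext x
  have h : multVec (fun a : ZMod 3 => -a) x o
      = (Finset.univ.filter (fun j => x j ≠ 0)).card := by
    unfold multVec
    rw [← Fintype.card_subtype, ← Nat.card_eq_fintype_card]
    refine Nat.card_congr (Equiv.subtypeEquivRight fun j => ?_)
    have : ∀ a : ZMod 3, (a = 1 ∨ a = -1) ↔ a ≠ 0 := by decide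
    exact this (x j)
  unfold signFlip condInv
  simp only [Set.mem_ofPred_eq, h]
  rfl

/-! ### Structure of an arbitrary 3-biquandle -/

section Structure

variable {X : Type*} {B : (Fin 3 → X) → (Fin 3 → X)}

lemma first_symm (hB : IsBiquandle 3 B) (a b c : X) : B ![a, b, c] 0 = B ![a, c, b] 0 := by
  have h := congrFun (hB.perm_equivariant (Equiv.swap 1 2) ![a, b, c]) 0
  have hx : (![a, b, c] ∘ Equiv.swap (1 : Fin 3) 2) = ![a, c, b] := by
    funext i
    fin_cases i <;> rfl
  rw [hx] at h
  exact h.symm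

/-- All coordinates of `B` are obtained from its first coordinate. -/
lemma eq_first (hB : IsBiquandle 3 B) (a b c : X) :
    B ![a, b, c] = ![B ![a, b, c] 0, B ![b, a, c] 0, B ![c, a, b] 0] := by
  have h1 := congrFun (hB.perm_equivariant (Equiv.swap 0 1) ![a, b, c]) 0
  have h2 := congrFun (hB.perm_equivariant (Equiv.swap 0 2) ![a, b, c]) 0
  have hx1 : (![a, b, c] ∘ Equiv.swap (0 : Fin 3) 1) = ![b, a, c] := by
    funext i
    fin_cases i <;> rfl
  have hx2 : (![a, b, c] ∘ Equiv.swap (0 : Fin 3) 2) = ![c, b, a] := by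
    funext i
    fin_cases i <;> rfl
  rw [hx1] at h1
  rw [hx2, first_symm hB] at h2
  funext i
  fin_cases i
  · rfl
  · exact h1.symm
  · exact h2.symm

/-- Far commutativity, spelled out on the first and on the shared coordinate. -/
lemma far_comm_coords (hB : IsBiquandle 3 B) (a b c d e : X) :
    B ![a, b, B ![c, d, e] 0] 0 = B ![a, b, c] 0 ∧
    B ![B ![c, d, e] 0, a, b] 0 = B ![B ![c, a, b] 0, d, e] 0 := by
  have H := hB.far_comm 2 le_rfl le_rfl (by decide) (by decide)
  have Hx := congrFun H ![a, b, c, d, e]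
  set S : Finset (Fin 5) := Finset.univ.filter (fun i : Fin (2*3-1) => (i : ℕ) < 3) with hS
  set T : Finset (Fin 5) :=
    Finset.univ.filter (fun i : Fin (2*3-1) => 2 ≤ (i : ℕ) ∧ (i : ℕ) < 3 + 2) with hT
  have cS : S.card = 3 := by decide
  have cT : T.card = 3 := by decide
  change applyOn B S cS (applyOn B T cT ![a, b, c, d, e])
    = applyOn B T cT (applyOn B S cS ![a, b, c, d, e]) at Hx
  have vS : ∀ x : Fin 5 → X, applyOn B S cS x =
      ![B ![x 0, x 1, x 2] 0, B ![x 0, x 1, x 2] 1, B ![x 0, x 1, x 2] 2, x 3, x 4] := by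
    intro x
    have hv := applyOn_apply_enum B S cS x ![0, 1, 2] (by decide) (by decide)
    have hx : x ∘ ![0, 1, 2] = ![x 0, x 1, x 2] := by
      funext i
      fin_cases i <;> rfl
    rw [hx] at hv
    funext i
    fin_cases i
    · exact hv 0
    · exact hv 1
    · exact hv 2
    · exact applyOn_of_notMem B S cS x 3 (by decide)
    · exact applyOn_of_notMem B S cS x 4 (by decide)
  have vT : ∀ x : Fin 5 → X, applyOn B T cT x =
      ![x 0, x 1, B ![x 2, x 3, x 4] 0, B ![x 2, x 3, x 4] 1, B ![x 2, x 3, x 4] 2] := by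
    intro x
    have hv := applyOn_apply_enum B T cT x ![2, 3, 4] (by decide) (by decide)
    have hx : x ∘ ![2, 3, 4] = ![x 2, x 3, x 4] := by
      funext i
      fin_cases i <;> rfl
    rw [hx] at hv
    funext i
    fin_cases i
    · exact applyOn_of_notMem B T cT x 0 (by decide)
    · exact applyOn_of_notMem B T cT x 1 (by decide)
    · exact hv 0
    · exact hv 1
    · exact hv 2
  rw [vS, vT, vT, vS] at Hx
  refine ⟨congrFun Hx 0, ?_⟩
  have h2 := congrFun Hx 2
  change B ![a, b, B ![c, d, e] 0] 2 = B ![B ![a, b, c] 2, d, e] 0 at h2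
  rw [eq_first hB a b, eq_first hB a b c] at h2
  exact h2

lemma first_invariant (hB : IsBiquandle 3 B) (a b c d e : X) :
    B ![a, b, B ![c, d, e] 0] 0 = B ![a, b, c] 0 :=
  (far_comm_coords hB a b c d e).1

lemma first_comm (hB : IsBiquandle 3 B) (a b c d e : X) :
    B ![B ![c, d, e] 0, a, b] 0 = B ![B ![c, a, b] 0, d, e] 0 :=
  (far_comm_coords hB a b c d e).2

lemma first_involutive (hB : IsBiquandle 3 B) (a b c : X) :
    B ![B ![a, b, c] 0, b, c] 0 = a := by
  have h := congrFun (hB.involutive ![a, b, c]) 0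
  rw [eq_first hB a b c, first_invariant hB, first_symm hB, first_invariant hB,
    first_symm hB] at h
  exact h

end Structure

/-! ### Reduction to sign flips -/

lemma exists_conj_neg : ∀ σ : ZMod 3 → ZMod 3, (∀ a, σ (σ a) = a) → (∃ a, σ a ≠ a) →
    ∃ φ : Equiv.Perm (ZMod 3), ∀ a, φ (σ a) = -φ a := by
  decide

lemma eq_neg_or_id_of_comm_neg : ∀ ρ : ZMod 3 → ZMod 3, (∀ a, ρ (ρ a) = a) →
    (∀ a, ρ (-a) = -ρ a) → (∀ a, ρ a = if ρ 1 = -1 then -a else a) := by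
  decide

lemma card_nonzero : ∀ a b c : ZMod 3,
    (Finset.univ.filter (fun j => ![a, b, c] j ≠ 0)).card
      = (if a = 0 then 0 else 1) + (if b = 0 then 0 else 1) + (if c = 0 then 0 else 1) := by
  decide

/-- Every nontrivial 3-biquandle on `ZMod 3` is isomorphic to a sign flip: its coordinate maps
generate a single transposition, which a relabelling turns into negation. -/
theorem exists_iso_signFlip (B : (Fin 3 → ZMod 3) → (Fin 3 → ZMod 3)) (hB : IsBiquandle 3 B)
    (hne : B ≠ id) : ∃ s ∈ ({1, 2, 3} : Finset ℕ).powerset, BiquandleIso B (signFlip s) := by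
  classical
  obtain ⟨b₀, c₀, a₀, h₀⟩ : ∃ b c a, B ![a, b, c] 0 ≠ a := by
    by_contra! hcon
    apply hne
    funext x
    have hx : x = ![x 0, x 1, x 2] := by
      funext i
      fin_cases i <;> rfl
    rw [hx, eq_first hB, hcon, hcon, hcon]
    rfl
  obtain ⟨φ, hφ⟩ := exists_conj_neg (fun a => B ![a, b₀, c₀] 0)
    (fun a => first_involutive hB a b₀ c₀) ⟨a₀, h₀⟩
  -- `g` is the first coordinate of the biquandle transported along `φ`.
  set g : ZMod 3 → ZMod 3 → ZMod 3 → ZMod 3 :=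
    fun a b c => φ (B ![φ.symm a, φ.symm b, φ.symm c] 0) with hg
  have g_neg : ∀ a, g a (φ b₀) (φ c₀) = -a := by
    intro a
    simpa [hg] using hφ (φ.symm a)
  have g_symm : ∀ a b c, g a b c = g a c b := by
    intro a b c
    simp only [hg]
    rw [first_symm hB]
  have g_inv : ∀ a b c, g a b (-c) = g a b c := by
    intro a b c
    rw [← g_neg c]
    simp only [hg, Equiv.symm_apply_apply]
    rw [first_invariant hB]
  have g_comm : ∀ a b c, g (-a) b c = -g a b c := by
    intro a b c
    rw [← g_neg a, ← g_neg (g a b c)]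
    simp only [hg, Equiv.symm_apply_apply]
    rw [first_comm hB]
  have g_invol : ∀ a b c, g (g a b c) b c = a := by
    intro a b c
    simp only [hg, Equiv.symm_apply_apply]
    rw [first_involutive hB]
    simp
  have g_eq : ∀ a b c, g a b c = if g 1 b c = -1 then -a else a := fun a b c =>
    eq_neg_or_id_of_comm_neg (fun a => g a b c) (fun a => g_invol a b c)
      (fun a => g_comm a b c) a
  -- A nonzero `a` together with `(0, 0)`, `(0, 1)`, `(1, 1)` has `1`, `2`, `3` nonzero coordinates.
  let s : Finset ℕ := ({1, 2, 3} : Finset ℕ).filter (fun n =>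
    (n = 1 ∧ g 1 0 0 = -1) ∨ (n = 2 ∧ g 1 0 1 = -1) ∨ (n = 3 ∧ g 1 1 1 = -1))
  have key : ∀ a b c, g a b c = signFlip s ![a, b, c] 0 := by
    have e2 : ∀ b, g 1 b 2 = g 1 b 1 := fun b => g_inv 1 b 1
    have e2' : ∀ b, g 1 2 b = g 1 1 b := fun b => by rw [g_symm, e2, g_symm]
    have e10 : g 1 1 0 = g 1 0 1 := g_symm 1 1 0
    have m1 : 1 ∈ s ↔ g 1 0 0 = -1 := by simp [s]
    have m2 : 2 ∈ s ↔ g 1 0 1 = -1 := by simp [s]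
    have m3 : 3 ∈ s ↔ g 1 1 1 = -1 := by simp [s]
    intro a b c
    rw [g_eq]
    unfold signFlip
    rw [card_nonzero]
    have three : ∀ z : ZMod 3, z = 0 ∨ z = 1 ∨ z = 2 := by decide
    have h10 : (1 : ZMod 3) ≠ 0 := by decide
    have h20 : (2 : ZMod 3) ≠ 0 := by decide
    rcases three a with rfl | rfl | rfl
    · split_ifs <;> simp
    all_goals
      rcases three b with rfl | rfl | rfl <;> rcases three c with rfl | rfl | rfl <;>
        simp only [e2, e2', e10, h10, h20, if_true, if_false, Nat.reduceAdd, m1, m2, m3] <;>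
        split_ifs <;> rfl
  refine ⟨s, by simp [s], φ, fun x => ?_⟩
  have hx : x = ![x 0, x 1, x 2] := by
    funext i
    fin_cases i <;> rfl
  have hy : (fun i => φ (x i)) = ![φ (x 0), φ (x 1), φ (x 2)] := by
    funext i
    fin_cases i <;> rfl
  have hs := isBiquandle_signFlip s
  rw [hy, eq_first hs, ← key, ← key, ← key, hx, eq_first hB]
  funext i
  fin_cases i <;> simp [hg]

/-! ### Counting isomorphism classes -/

/-- The number of tuples moved by `B`. -/
def movedCount (B : (Fin 3 → ZMod 3) → (Fin 3 → ZMod 3)) : ℕ :=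
  (Finset.univ.filter (fun x => B x ≠ x)).card

lemma movedCount_eq_of_iso {B B' : (Fin 3 → ZMod 3) → (Fin 3 → ZMod 3)}
    (h : BiquandleIso B B') : movedCount B = movedCount B' := by
  obtain ⟨φ, hφ⟩ := h
  refine Finset.card_bij (fun x _ i => φ (x i)) ?_ ?_ ?_
  · intro x hx
    rw [Finset.mem_filter] at hx ⊢
    refine ⟨Finset.mem_univ _, fun h => hx.2 ?_⟩
    rw [← hφ] at h
    funext i
    exact φ.injective (congrFun h i)
  · intro x _ y _ h
    funext i
    exact φ.injective (congrFun h i)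
  · intro y hy
    have hφy : (fun i => φ (φ.symm (y i))) = y := by simp
    refine ⟨fun i => φ.symm (y i), ?_, hφy⟩
    rw [Finset.mem_filter] at hy ⊢
    refine ⟨Finset.mem_univ _, fun h => hy.2 ?_⟩
    have h' := hφ (fun i => φ.symm (y i))
    rw [h, hφy] at h'
    exact h'.symm

set_option maxRecDepth 100000 in
lemma movedCount_signFlip : ∀ s ∈ ({1, 2, 3} : Finset ℕ).powerset,
    movedCount (signFlip s) = (if 1 ∈ s then 6 else 0) + (if 2 ∈ s then 12 else 0)
      + (if 3 ∈ s then 8 else 0) := by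
  decide

lemma movedCount_signFlip_injective : ∀ s ∈ ({1, 2, 3} : Finset ℕ).powerset,
    ∀ t ∈ ({1, 2, 3} : Finset ℕ).powerset,
    movedCount (signFlip s) = movedCount (signFlip t) → s = t := by
  intro s hs t ht h
  rw [movedCount_signFlip s hs, movedCount_signFlip t ht] at h
  revert s t
  decide

lemma signFlip_empty : signFlip ∅ = id := by
  funext x
  simp [signFlip]

/-- on `ℤ/3ℤ` there are, up to isomorphism, exactly `7` nontrivial
3-biquandles, and every nontrivial 3-biquandle on `ℤ/3ℤ` is isomorphic to a conditional
involution 3-biquandle `B_{τ,μ}`. -/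
theorem biquandle_zmod3_classification :
    Nat.card (Quot (fun (B B' : { B : (Fin 3 → ZMod 3) → (Fin 3 → ZMod 3) //
        IsBiquandle 3 B ∧ B ≠ id }) => BiquandleIso B.1 B'.1)) = 7 ∧
    ∀ B : (Fin 3 → ZMod 3) → (Fin 3 → ZMod 3), IsBiquandle 3 B → B ≠ id →
      ∃ (τ : ZMod 3 → ZMod 3) (μ : Set (NonfixedOrbit τ → ℕ)),
        Function.Involutive τ ∧ BiquandleIso B (condInv (k := 3) τ μ) := by
  constructor
  · have hne : ∀ s ∈ ({1, 2, 3} : Finset ℕ).powerset.erase ∅, signFlip s ≠ id := by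
      intro s hs h
      rw [Finset.mem_erase] at hs
      refine hs.1 (movedCount_signFlip_injective s hs.2 ∅ (by simp) ?_)
      rw [h, signFlip_empty]
    let F : ↥(({1, 2, 3} : Finset ℕ).powerset.erase ∅) →
        Quot (fun (B B' : { B : (Fin 3 → ZMod 3) → (Fin 3 → ZMod 3) //
          IsBiquandle 3 B ∧ B ≠ id }) => BiquandleIso B.1 B'.1) :=
      fun s => Quot.mk _ ⟨signFlip s.1, isBiquandle_signFlip s.1, hne s.1 s.2⟩
    have hF : Function.Bijective F := by
      constructor
      · intro s t h
        have h' := congrArg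
          (Quot.lift (fun B : { B : (Fin 3 → ZMod 3) → (Fin 3 → ZMod 3) //
            IsBiquandle 3 B ∧ B ≠ id } => movedCount B.1)
            (fun _ _ => movedCount_eq_of_iso)) h
        exact Subtype.ext (movedCount_signFlip_injective _ (Finset.mem_of_mem_erase s.2) _
          (Finset.mem_of_mem_erase t.2) h')
      · intro q
        induction q using Quot.ind with
        | mk B =>
          obtain ⟨B, hB, hBne⟩ := B
          obtain ⟨s, hs, hiso⟩ := exists_iso_signFlip B hB hBne
          have hs0 : s ≠ ∅ := by
            rintro rfl
            obtain ⟨φ, hφ⟩ := hiso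
            apply hBne
            funext x i
            rw [signFlip_empty] at hφ
            exact φ.injective (congrFun (hφ x) i)
          refine ⟨⟨s, Finset.mem_erase.2 ⟨hs0, hs⟩⟩, Eq.symm (Quot.sound ?_)⟩
          exact hiso
    rw [← Nat.card_eq_of_bijective F hF, Nat.card_eq_fintype_card, Fintype.card_coe]
    rfl
  · intro B hB hne
    obtain ⟨s, -, hiso⟩ := exists_iso_signFlip B hB hne
    obtain ⟨μ, hμ⟩ := signFlip_eq_condInv s
    exact ⟨fun a => -a, μ, neg_neg, hμ ▸ hiso⟩
end
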